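/- arXiv:0906.3183 — 2 statements merged into one kernel-verified Lean document; each statement's English description precedes it below -/
import Mathlib

section
/- (Lemma 3, finite version: bound on the number of labeled indices.) Let 1 ≥ D_1 ≥ D_2 ≥ ⋯ ≥ D_K > 0 and let (B_1,…,B_K) be the binary labels of the relaxed distortion vector construction. Then ∑_{k=1}^K B_k ≤ log₂(D_1) − log₂(D_K) + 1. -/
/-!
Write `N_k = ∑_{j ≤ k} B_j`. The relaxed distortion `D*` strictly decreases each time a label `1`
is issued, and just after the first such label, at index `m`, it equals `2 D_m ≤ 2 D_1`; so
`D*_k ≤ 2 D_1` whenever `N_k ≥ 1`. At the last labelled index `l ≤ K` we have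
`D*_l = 2^{N_K} D_l ≥ 2^{N_K} D_K`, hence `2^{N_K} D_K ≤ 2 D_1`, and the bound follows by taking
logarithms; if no index is labelled, `N_K = 0` and `D_K ≤ D_1` suffices. The induction is carried by `relax_invariant`.
-/

open Finset

/-- The recursion of equation (15): `relax D k = (D*_k, ∑_{j=1}^k B_j)`, with `D*_0 = 1`,
and for `k ≥ 1`: if `2^{1+∑_{j<k} B_j} D_k ≥ D*_{k-1}` then `(D*_k, B_k) = (D*_{k-1}, 0)`,
otherwise `(D*_k, B_k) = (2^{1+∑_{j<k} B_j} D_k, 1)`. -/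
noncomputable def relax (D : ℕ → ℝ) : ℕ → ℝ × ℕ
  | 0 => (1, 0)
  | k + 1 =>
    let p := relax D k
    if p.1 ≤ 2 ^ (1 + p.2) * D (k + 1) then (p.1, p.2)
    else (2 ^ (1 + p.2) * D (k + 1), p.2 + 1)

/-- The binary label `B_k`. -/
noncomputable def Blabel (D : ℕ → ℝ) (k : ℕ) : ℕ := (relax D k).2 - (relax D (k - 1)).2

lemma relax_snd_le_succ (D : ℕ → ℝ) (k : ℕ) : (relax D k).2 ≤ (relax D (k + 1)).2 := by
  simp only [relax]
  split_ifs <;> simp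

/-- The truncated differences defining `Blabel` telescope because the label count is monotone. -/
lemma sum_Blabel (D : ℕ → ℝ) (K : ℕ) : ∑ k ∈ Finset.Icc 1 K, Blabel D k = (relax D K).2 := by
  induction K with
  | zero => simp [relax]
  | succ k ih =>
    rw [Finset.sum_Icc_succ_top (by omega), ih]
    simp only [Blabel, Nat.add_sub_cancel]
    have := relax_snd_le_succ D k
    omega

/-- The invariant behind the bound. The third clause is a disjunction because `D*_k = 1` before
the first label `1` is issued, and this need not be at most `2 D_1`. -/
lemma relax_invariant (K : ℕ) (D : ℕ → ℝ)
    (hDmono : ∀ k ∈ Finset.Icc 1 (K - 1), D (k + 1) ≤ D k) (h1 : 0 < D 1)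
    (k : ℕ) (hk : 1 ≤ k) (hkK : k ≤ K) :
    D k ≤ D 1 ∧ 2 ^ (relax D k).2 * D k ≤ 2 * D 1 ∧
      ((relax D k).2 = 0 ∨ (relax D k).1 ≤ 2 * D 1) := by
  induction k, hk using Nat.le_induction with
  | base =>
    by_cases h : 1 ≤ 2 * D 1
    · simp [relax, h]
      linarith
    · simp [relax, h]
  | succ k hk ih =>
    obtain ⟨ha, hb, hc⟩ := ih (by omega)
    have hm : D (k + 1) ≤ D k := hDmono k (by simp only [Finset.mem_Icc]; omega)
    refine ⟨hm.trans ha, ?_⟩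
    simp only [relax]
    split_ifs with h
    · exact ⟨(mul_le_mul_of_nonneg_left hm (by positivity)).trans hb, hc⟩
    · have key : 2 ^ (1 + (relax D k).2) * D (k + 1) ≤ 2 * D 1 := by
        rcases hc with hc | hc
        · rw [hc]
          norm_num
          exact hm.trans ha
        · exact (not_le.mp h).le.trans hc
      exact ⟨by rwa [add_comm (relax D k).2 1], Or.inr key⟩

/-- **Lemma 3 (finite version): bound on the number of labeled indices.**
For `1 ≥ D_1 ≥ ⋯ ≥ D_K > 0`, the binary labels of the relaxed distortion vector satisfy
`∑_{k=1}^K B_k ≤ log₂ D_1 − log₂ D_K + 1`. -/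
theorem sum_labels_bound
    (K : ℕ) (hK : 1 ≤ K) (D : ℕ → ℝ)
    (hD1 : D 1 ≤ 1)
    (hDpos : ∀ k ∈ Finset.Icc 1 K, 0 < D k)
    (hDmono : ∀ k ∈ Finset.Icc 1 (K - 1), D (k + 1) ≤ D k) :
    ((∑ k ∈ Finset.Icc 1 K, Blabel D k : ℕ) : ℝ)
      ≤ Real.logb 2 (D 1) - Real.logb 2 (D K) + 1 := by
  rw [sum_Blabel]
  have h1 : 0 < D 1 := hDpos 1 (by simp only [Finset.mem_Icc]; omega)
  have hK0 : 0 < D K := hDpos K (by simp only [Finset.mem_Icc]; omega)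
  have h := (relax_invariant K D hDmono h1 K hK le_rfl).2.1
  have hlog := Real.logb_le_logb_of_le (b := 2) (by norm_num) (by positivity) h
  rw [Real.logb_mul (by positivity) hK0.ne', Real.logb_mul (by norm_num) h1.ne',
    Real.logb_pow, Real.logb_self_eq_one (by norm_num)] at hlog
  linarith
end

section
/- (Multiplicative-factor bound behind Corollary 2.) Let 1 ≥ D_1 ≥ D_2 ≥ ⋯ ≥ D_K > 0 and let (D*_1,…,D*_K) be the associated relaxed distortion vector. Then for every k ∈ {1,…,K}: D*_k ≤ 4·(D_1/D_K)·D_k. In particular, if D_K ≥ d_min for some d_min > 0, then D*_k ≤ (4/d_min)·D_k for every k. -/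
/-!
The relaxed distortions `D*_k` are nonincreasing in `k`, and the first step of the recursion
gives `D*_1 ≤ 2 D_1`, whichever branch is taken. Hence `D*_k ≤ 2 D_1 ≤ 4 D_1 (D_k / D_K)`, using
`D_k ≥ D_K`. The second bound follows from `D_1 ≤ 1` and `D_K ≥ d_min`.
-/

open Finset

/-- The relaxed distortion `D*_k`. -/
noncomputable def Dstar (D : ℕ → ℝ) (k : ℕ) : ℝ := (relax D k).1

theorem Dstar_succ_le (D : ℕ → ℝ) (k : ℕ) : Dstar D (k + 1) ≤ Dstar D k := by
  unfold Dstar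
  simp only [relax]
  split_ifs with h
  · exact le_rfl
  · exact (not_le.mp h).le

theorem Dstar_one_le (D : ℕ → ℝ) : Dstar D 1 ≤ 2 * D 1 := by
  unfold Dstar
  simp only [relax]
  norm_num
  split_ifs with h
  · exact h
  · exact le_rfl

theorem Dstar_le_two_mul (D : ℕ → ℝ) {k : ℕ} (hk : 1 ≤ k) : Dstar D k ≤ 2 * D 1 :=
  (antitone_nat_of_succ_le (Dstar_succ_le D) hk).trans (Dstar_one_le D)

/-- **Multiplicative-factor bound behind Corollary 2.**
For `1 ≥ D_1 ≥ ⋯ ≥ D_K > 0`, the relaxed distortion vector satisfies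
`D*_k ≤ 4 (D_1/D_K) D_k` for every `k`; in particular, if `D_K ≥ d_min > 0` then
`D*_k ≤ (4/d_min) D_k` for every `k`. -/
theorem relaxed_distortion_factor_bound
    (K : ℕ) (hK : 1 ≤ K) (D : ℕ → ℝ)
    (hD1 : D 1 ≤ 1)
    (hDpos : ∀ k ∈ Finset.Icc 1 K, 0 < D k)
    (hDmono : ∀ k ∈ Finset.Icc 1 (K - 1), D (k + 1) ≤ D k) :
    (∀ k ∈ Finset.Icc 1 K, Dstar D k ≤ 4 * (D 1 / D K) * D k) ∧
      (∀ dmin : ℝ, 0 < dmin → dmin ≤ D K →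
        ∀ k ∈ Finset.Icc 1 K, Dstar D k ≤ (4 / dmin) * D k) := by
  have hpos : 0 < D K := hDpos K (mem_Icc.mpr ⟨hK, le_rfl⟩)
  have hpos1 : 0 < D 1 := hDpos 1 (mem_Icc.mpr ⟨le_rfl, hK⟩)
  have hle : ∀ k ∈ Finset.Icc 1 K, D K ≤ D k := by
    intro k hk
    obtain ⟨h1, hkK⟩ := mem_Icc.mp hk
    refine Nat.decreasingInduction' (P := fun j => D K ≤ D j) (fun j hj hkj ih => ?_) hkK le_rfl
    exact ih.trans (hDmono j (mem_Icc.mpr ⟨by omega, by omega⟩))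
  have hmain : ∀ k ∈ Finset.Icc 1 K, Dstar D k ≤ 4 * (D 1 / D K) * D k := by
    intro k hk
    calc Dstar D k ≤ 2 * D 1 := Dstar_le_two_mul D (mem_Icc.mp hk).1
      _ ≤ 4 * D 1 := by linarith
      _ = 4 * (D 1 / D K) * D K := by field_simp
      _ ≤ 4 * (D 1 / D K) * D k := by
        gcongr
        exact hle k hk
  refine ⟨hmain, fun dmin hd hdK k hk => (hmain k hk).trans ?_⟩
  have hk0 := hDpos k hk
  calc 4 * (D 1 / D K) * D k ≤ 4 * (1 / dmin) * D k := by gcongr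
    _ = 4 / dmin * D k := by ring
end
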